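/- Let A_ee, A_ef, A_ff be the entries of a symmetric positive-definite real 2×2 matrix A (so A_ee > 0, A_ff > 0 and det A = A_ee·A_ff − A_ef² > 0), let H > 0, and let ℰ > 0 satisfy ℰ² ≥ 4·det(A)/H². Then: (i) every λ > 0 with | λ² − A_ee·ℰ/(2·det A) | ≤ A_ee·√(ℰ² − 4·det(A)/H²) / (2·det A) satisfies A_ef²·λ² + A_ee·( ℰ − A_ee·(λH)⁻² − A_ff·λ² ) ≥ 0, and consequently there exists x ∈ ℝ with A_ee·(λH)⁻² + A_ff·λ² + 2·A_ef·λ·x + A_ee·x² = ℰ; (ii) such a λ > 0 exists, since the closed interval of admissible values of λ² is contained in [0, ∞) and has positive right endpoint. -/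

import Mathlib

/-!
Write `D = Aee * Aff - Aef ^ 2`. A quarter of the discriminant of the quadratic in `x` is
`Q = Aef ^ 2 * l ^ 2 + Aee * (Ecal - Aee * (l * H)⁻² - Aff * l ^ 2)`, and completing the square
in `l ^ 2` gives
`l ^ 2 * Q = D * ((Aee * √(Ecal ^ 2 - 4 * D / H ^ 2) / (2 * D)) ^ 2`
`  - (l ^ 2 - Aee * Ecal / (2 * D)) ^ 2)`,
so `Q ≥ 0` as soon as `l ^ 2` lies in the admissible interval; the root is then
`x = (√Q - Aef * l) / Aee`. The interval contains its midpoint `Aee * Ecal / (2 * D)`, which is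
positive and hence the square of some `l > 0`.
-/

/-- existence of the interface reconstruction.  Let
`A_ee, A_ef, A_ff` be the entries of a symmetric positive-definite 2×2 matrix
(`A_ee > 0`, `A_ff > 0`, `det A = A_ee·A_ff − A_ef² > 0`), let `H > 0` and let
`ℰ > 0` satisfy `ℰ² ≥ 4·det(A)/H²`.  Then:
(i) every `λ > 0` with `|λ² − A_ee·ℰ/(2 det A)| ≤ A_ee·√(ℰ² − 4 det A/H²)/(2 det A)`
satisfies `A_ef²·λ² + A_ee·(ℰ − A_ee·(λH)⁻² − A_ff·λ²) ≥ 0`, and consequently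
there exists `x ∈ ℝ` with `A_ee·(λH)⁻² + A_ff·λ² + 2·A_ef·λ·x + A_ee·x² = ℰ`;
(ii) such a `λ > 0` exists. -/
theorem interface_reconstruction_exists (Aee Aef Aff H Ecal : ℝ)
    (hAee : 0 < Aee) (hAff : 0 < Aff) (hdet : 0 < Aee * Aff - Aef ^ 2)
    (hH : 0 < H) (hE : 0 < Ecal)
    (hE2 : Ecal ^ 2 ≥ 4 * (Aee * Aff - Aef ^ 2) / H ^ 2) :
    (∀ l : ℝ, 0 < l →
      |l ^ 2 - Aee * Ecal / (2 * (Aee * Aff - Aef ^ 2))|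
          ≤ Aee * Real.sqrt (Ecal ^ 2 - 4 * (Aee * Aff - Aef ^ 2) / H ^ 2)
              / (2 * (Aee * Aff - Aef ^ 2)) →
        0 ≤ Aef ^ 2 * l ^ 2 + Aee * (Ecal - Aee * ((l * H) ^ 2)⁻¹ - Aff * l ^ 2) ∧
        ∃ x : ℝ, Aee * ((l * H) ^ 2)⁻¹ + Aff * l ^ 2 + 2 * Aef * l * x + Aee * x ^ 2 = Ecal) ∧
    (∃ l : ℝ, 0 < l ∧
      |l ^ 2 - Aee * Ecal / (2 * (Aee * Aff - Aef ^ 2))|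
          ≤ Aee * Real.sqrt (Ecal ^ 2 - 4 * (Aee * Aff - Aef ^ 2) / H ^ 2)
              / (2 * (Aee * Aff - Aef ^ 2))) := by
  constructor
  · intro l hl habs
    have hQ : 0 ≤ Aef ^ 2 * l ^ 2 + Aee * (Ecal - Aee * ((l * H) ^ 2)⁻¹ - Aff * l ^ 2) := by
      have hsq := sq_le_sq.mpr (habs.trans (le_abs_self _))
      rw [div_pow, mul_pow, Real.sq_sqrt (sub_nonneg.mpr hE2)] at hsq
      have hid : l ^ 2 * (Aef ^ 2 * l ^ 2
            + Aee * (Ecal - Aee * ((l * H) ^ 2)⁻¹ - Aff * l ^ 2))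
          = (Aee * Aff - Aef ^ 2)
            * (Aee ^ 2 * (Ecal ^ 2 - 4 * (Aee * Aff - Aef ^ 2) / H ^ 2)
                / (2 * (Aee * Aff - Aef ^ 2)) ^ 2
              - (l ^ 2 - Aee * Ecal / (2 * (Aee * Aff - Aef ^ 2))) ^ 2) := by
        -- Naming the determinant lets `field_simp` clear it as an atomic nonzero denominator.
        obtain ⟨D, hD⟩ : ∃ D, D = Aee * Aff - Aef ^ 2 := ⟨_, rfl⟩
        have hf : Aef ^ 2 = Aee * Aff - D := by linarith
        rw [← hD] at hdet ⊢
        rw [hf]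
        field_simp
        ring
      refine nonneg_of_mul_nonneg_right ?_ (pow_pos hl 2)
      rw [hid]
      exact mul_nonneg hdet.le (sub_nonneg.mpr hsq)
    refine ⟨hQ, (√(Aef ^ 2 * l ^ 2
      + Aee * (Ecal - Aee * ((l * H) ^ 2)⁻¹ - Aff * l ^ 2)) - Aef * l) / Aee, ?_⟩
    have hs := Real.sq_sqrt hQ
    generalize √(Aef ^ 2 * l ^ 2
      + Aee * (Ecal - Aee * ((l * H) ^ 2)⁻¹ - Aff * l ^ 2)) = s at hs ⊢
    generalize ((l * H) ^ 2)⁻¹ = u at hs ⊢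
    field_simp
    linear_combination hs
  · refine ⟨√(Aee * Ecal / (2 * (Aee * Aff - Aef ^ 2))), Real.sqrt_pos.mpr (by positivity), ?_⟩
    rw [Real.sq_sqrt (by positivity), sub_self, abs_zero]
    positivity
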